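/- Every triangle-edge tree is common. That is, if H admits a K₃-decomposition (F, T) with |X ∩ Y| = 2 for every edge XY of T, then for every ε > 0 there exists n₀ such that for all n ≥ n₀, every red/blue colouring of the edges of the complete graph K_n contains at least (2^{1−|E(H)|} − ε)·n^{|V(H)|} monochromatic homomorphic labelled copies of H (i.e., maps V(H) → V(K_n) sending every edge of H to a red edge, plus those sending every edge of H to a blue edge, counted together). -/

import Mathlib

open MeasureTheory

/-- The homomorphism density `t_H(G)`. -/
noncomputable def homDensity {α β : Type*} [Fintype α] [Fintype β]
    (H : SimpleGraph α) (G : SimpleGraph β) : ℝ :=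
  (Nat.card (H →g G) : ℝ) / (Fintype.card β : ℝ) ^ (Fintype.card α)

/-- The number of edges of a graph. -/
noncomputable def edgeCount {α : Type*} (H : SimpleGraph α) : ℕ :=
  Nat.card H.edgeSet

/-- `G` is `(ρ,d)`-dense: every vertex subset `X` with `|X| ≥ ρ|V(G)|`
spans at least `(d/2)|X|²` edges. -/
def LocallyDense {β : Type*} [Fintype β] (G : SimpleGraph β) (ρ d : ℝ) : Prop :=
  ∀ X : Finset β, ρ * (Fintype.card β : ℝ) ≤ (X.card : ℝ) →
    d / 2 * (X.card : ℝ) ^ 2 ≤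
      (Nat.card {e : Sym2 β // e ∈ G.edgeSet ∧ ∀ v ∈ e, v ∈ X} : ℝ)

/-- `(bag, T)` is a tree decomposition of `H`. -/
def IsTreeDecomp {α ι : Type*} [DecidableEq α] (H : SimpleGraph α) (bag : ι → Finset α)
    (T : SimpleGraph ι) : Prop :=
  T.IsTree ∧
  (∀ v : α, ∃ X, v ∈ bag X) ∧
  (∀ u v : α, H.Adj u v → ∃ X, u ∈ bag X ∧ v ∈ bag X) ∧
  (∀ X Y Z : ι, ∀ p : T.Walk X Y, p.IsPath → Z ∈ p.support →
    bag X ∩ bag Y ⊆ bag Z)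

/-- `(bag, T)` is a `J`-decomposition of `H`: a tree decomposition in which every
bag induces a copy of `J`, and for adjacent bags there is an isomorphism between the
induced copies of `J` fixing the intersection pointwise. -/
def IsJDecomp {α ι γ : Type*} [DecidableEq α] (H : SimpleGraph α) (J : SimpleGraph γ)
    (bag : ι → Finset α) (T : SimpleGraph ι) : Prop :=
  IsTreeDecomp H bag T ∧
  (∀ X : ι, Nonempty (H.induce ↑(bag X) ≃g J)) ∧
  (∀ X Y : ι, T.Adj X Y → ∃ e : H.induce ↑(bag X) ≃g H.induce ↑(bag Y),
      ∀ (v : α) (h1 : v ∈ bag X) (h2 : v ∈ bag Y),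
        ((e ⟨v, h1⟩ : ↑(bag Y)) : α) = v)

/-- `H` is `J`-decomposable. -/
def JDecomposable {α γ : Type*} [DecidableEq α] (H : SimpleGraph α) (J : SimpleGraph γ) : Prop :=
  ∃ (ι : Type) (_ : Fintype ι) (bag : ι → Finset α) (T : SimpleGraph ι),
    IsJDecomp H J bag T

open Finset in
theorem avg_update {α V : Type*} [Fintype α] [DecidableEq α] [Fintype V]
    (w : α) (F : (α → V) → ℝ) :
    ∑ φ : α → V, ∑ c : V, F (Function.update φ w c) = (Fintype.card V : ℝ) * ∑ φ, F φ := by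
  classical
  have hinv : Function.Involutive
      (fun q : (α → V) × V => (Function.update q.1 w q.2, q.1 w)) := by
    rintro ⟨φ, c⟩
    simp
  have h := Equiv.sum_comp hinv.toPerm (fun q : (α → V) × V => F q.1)
  rw [Fintype.sum_prod_type, Fintype.sum_prod_type] at h
  simp only [Function.Involutive.coe_toPerm] at h
  rw [h]
  simp [Finset.mul_sum]

/-- Sets of vertices and edges of partial 2-trees. -/
inductive Build {α : Type*} [DecidableEq α] : Finset α → Finset (Sym2 α) → Prop
  | base (u v : α) (h : u ≠ v) : Build {u, v} {s(u, v)}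
  | step (S : Finset α) (E : Finset (Sym2 α)) (u v w : α) (h : Build S E)
      (huv : s(u, v) ∈ E) (hw : w ∉ S) :
      Build (insert w S) (insert s(w, u) (insert s(w, v) E))

theorem Build.mem {α : Type*} [DecidableEq α] {S : Finset α} {E : Finset (Sym2 α)}
    (h : Build S E) : ∀ x y, s(x, y) ∈ E → x ∈ S ∧ y ∈ S ∧ x ≠ y := by
  induction h with
  | base u v h =>
    intro x y hxy
    simp only [Finset.mem_singleton, Sym2.eq_iff] at hxy
    rcases hxy with ⟨rfl, rfl⟩ | ⟨rfl, rfl⟩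
    · simp [h]
    · simp [h.symm]
  | step S E u v w h huv hw ih =>
    obtain ⟨hu, hv, _⟩ := ih u v huv
    have hwu : w ≠ u := fun e => hw (e ▸ hu)
    have hwv : w ≠ v := fun e => hw (e ▸ hv)
    intro x y hxy
    simp only [Finset.mem_insert, Sym2.eq_iff] at hxy
    rcases hxy with (⟨rfl, rfl⟩ | ⟨rfl, rfl⟩) | (⟨rfl, rfl⟩ | ⟨rfl, rfl⟩) | hxy
    · simp [hu, hwu]
    · simp [hu, hwu.symm]
    · simp [hv, hwv]
    · simp [hv, hwv.symm]
    · obtain ⟨a, b, c⟩ := ih x y hxy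
      simp [a, b, c]

theorem Build.card {α : Type*} [DecidableEq α] {S : Finset α} {E : Finset (Sym2 α)}
    (h : Build S E) : E.card + 3 = 2 * S.card := by
  induction h with
  | base u v h => simp [Finset.card_pair h]
  | step S E u v w h huv hw ih =>
    obtain ⟨hu, hv, huv'⟩ := h.mem u v huv
    have h1 : s(w, v) ∉ E := fun hh => hw (h.mem _ _ hh).1
    have h2 : s(w, u) ∉ insert s(w, v) E := by
      simp only [Finset.mem_insert, Sym2.eq_iff, not_or]
      refine ⟨⟨fun hh => huv' hh.2, fun hh => hw (hh.1 ▸ hv)⟩, fun hh => hw (h.mem _ _ hh).1⟩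
    rw [Finset.card_insert_of_notMem h2, Finset.card_insert_of_notMem h1,
      Finset.card_insert_of_notMem hw]
    omega

theorem entropy_build {α V : Type*} [Fintype α] [DecidableEq α] [Fintype V] [Nonempty V]
    (τ : V → V → V → ℝ) (h01 : ∀ a b c, τ a b c = 0 ∨ τ a b c = 1)
    (hs1 : ∀ a b c, τ a b c = τ b a c) (hs2 : ∀ a b c, τ a b c = τ a c b)
    (wt : V → V → ℝ) (hwt : ∀ a b, wt a b = ∑ c, τ a b c)
    (N : ℝ) (hN : N = ∑ a, ∑ b, wt a b) (hNpos : 0 < N)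
    (S : Finset α) (E : Finset (Sym2 α)) (hB : Build S E) :
    ∃ P : (α → V) → ℝ, (∀ φ, 0 ≤ P φ) ∧
      (∀ φ x c, x ∉ S → P (Function.update φ x c) = P φ) ∧
      (∀ x y, s(x, y) ∈ E → ∀ g : V → V → ℝ,
        ∑ φ, P φ * g (φ x) (φ y) = ∑ a, ∑ b, wt a b / N * g a b) ∧
      (∑ φ, P φ * (-Real.log (P φ)) = Real.log N +
        ((Fintype.card α : ℝ) - S.card) * Real.log (Fintype.card V) +
        ((S.card : ℝ) - 3) * ∑ a, ∑ b, wt a b / N * Real.log (wt a b)) ∧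
      (∀ φ, P φ ≠ 0 → ∀ x y, s(x, y) ∈ E → wt (φ x) (φ y) ≠ 0) ∧
      (∑ φ, P φ = 1) := by
  have h0 : ∀ a b c, 0 ≤ τ a b c := by
    intro a b c; rcases h01 a b c with h | h <;> simp [h]
  have hwsymm : ∀ a b, wt a b = wt b a := by
    intro a b; rw [hwt, hwt]; exact Finset.sum_congr rfl fun c _ => hs1 a b c
  have hw0 : ∀ a b, 0 ≤ wt a b := by
    intro a b; rw [hwt]; exact Finset.sum_nonneg fun c _ => h0 a b c
  have hτw : ∀ a b c, τ a b c ≠ 0 → wt a b ≠ 0 := by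
    intro a b c hc
    rw [hwt]
    have : 0 < ∑ c, τ a b c :=
      Finset.sum_pos' (fun c _ => h0 a b c) ⟨c, Finset.mem_univ _, lt_of_le_of_ne (h0 a b c) hc.symm⟩
    exact this.ne'
  have hn : (0 : ℝ) < Fintype.card V := by exact_mod_cast Fintype.card_pos
  have hsum1 : ∑ a, ∑ b, wt a b / N * 1 = 1 := by
    simp only [mul_one, ← Finset.sum_div]
    rw [← hN, div_self hNpos.ne']
  induction hB with
  | base u v huv =>
    set n : ℝ := (Fintype.card V : ℝ) with hndef
    have key : ∀ g : V → V → ℝ,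
        ∑ φ : α → V, (wt (φ u) (φ v) / N * (n ^ 2 / n ^ (Fintype.card α))) * g (φ u) (φ v)
          = ∑ a, ∑ b, wt a b / N * g a b := by
      intro g
      have e1 := avg_update (V := V) u
        (fun φ : α → V => (wt (φ u) (φ v) / N * (n ^ 2 / n ^ (Fintype.card α))) * g (φ u) (φ v))
      have e2 := avg_update (V := V) v
        (fun φ : α → V => ∑ c, (wt c (φ v) / N * (n ^ 2 / n ^ (Fintype.card α))) * g c (φ v))
      simp only [Function.update_self, Function.update_of_ne huv.symm] at e1 e2
      rw [e1] at e2
      simp only [Finset.sum_const, Finset.card_univ, Fintype.card_fun, nsmul_eq_mul,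
        Nat.cast_pow] at e2
      rw [Finset.sum_comm] at e2
      have e3 : ∑ a, ∑ b, wt a b / N * (n ^ 2 / n ^ (Fintype.card α)) * g a b
          = (n ^ 2 / n ^ (Fintype.card α)) * ∑ a, ∑ b, wt a b / N * g a b := by
        simp only [Finset.mul_sum]
        refine Finset.sum_congr rfl fun a _ => Finset.sum_congr rfl fun b _ => by ring
      rw [e3, ← hndef] at e2
      have hnp : n ^ (Fintype.card α) ≠ 0 := (pow_pos hn _).ne'
      have e4 : n ^ Fintype.card α * (n ^ 2 / n ^ Fintype.card α *
        ∑ a, ∑ b, wt a b / N * g a b) = n ^ 2 * ∑ a, ∑ b, wt a b / N * g a b := by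
        field_simp
      rw [e4] at e2
      have hn2 : n ^ 2 ≠ 0 := (pow_pos hn _).ne'
      apply mul_left_cancel₀ hn2
      rw [e2]; ring
    have hc : 0 < n ^ 2 / n ^ (Fintype.card α) := by positivity
    refine ⟨fun φ => wt (φ u) (φ v) / N * (n ^ 2 / n ^ (Fintype.card α)), ?_, ?_, ?_, ?_, ?_, ?_⟩
    · intro φ
      have := hw0 (φ u) (φ v)
      positivity
    · intro φ x c hx
      simp only [Finset.mem_insert, Finset.mem_singleton, not_or] at hx
      simp [Function.update_of_ne (Ne.symm hx.1), Function.update_of_ne (Ne.symm hx.2)]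
    · intro x y hxy g
      simp only [Finset.mem_singleton, Sym2.eq_iff] at hxy
      rcases hxy with ⟨rfl, rfl⟩ | ⟨rfl, rfl⟩
      · exact key g
      · have := key (fun a b => g b a)
        rw [this, Finset.sum_comm]
        refine Finset.sum_congr rfl fun a _ => Finset.sum_congr rfl fun b _ => ?_
        rw [hwsymm]
    · rw [key (fun a b => -Real.log (wt a b / N * (n ^ 2 / n ^ (Fintype.card α))))]
      have : ∀ a b, wt a b / N * -Real.log (wt a b / N * (n ^ 2 / n ^ (Fintype.card α)))
          = (Real.log N + ((Fintype.card α : ℝ) - 2) * Real.log n) * (wt a b / N * 1)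
            - wt a b / N * Real.log (wt a b) := by
        intro a b
        by_cases hz : wt a b = 0
        · simp [hz]
        · rw [Real.log_mul (by positivity) hc.ne', Real.log_div hz hNpos.ne',
            Real.log_div (by positivity) (by positivity), Real.log_pow, Real.log_pow]
          push_cast
          ring
      simp only [this, Finset.sum_sub_distrib, ← Finset.mul_sum]
      rw [hsum1, Finset.card_pair huv]
      push_cast
      ring
    · intro φ hφ x y hxy
      have : wt (φ u) (φ v) ≠ 0 := by
        intro h; apply hφ; simp [h]
      simp only [Finset.mem_singleton, Sym2.eq_iff] at hxy
      rcases hxy with ⟨rfl, rfl⟩ | ⟨rfl, rfl⟩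
      · exact this
      · rwa [hwsymm]
    · have := key (fun _ _ => 1)
      rw [hsum1] at this
      simpa using this
  | step S E u v w h huv hw ih =>
    obtain ⟨P, p0, pind, pmarg, pent, psupp, psum⟩ := ih
    obtain ⟨hu, hv, huv'⟩ := h.mem u v huv
    have hwu : u ≠ w := fun e => hw (e ▸ hu)
    have hwv : v ≠ w := fun e => hw (e ▸ hv)
    set n : ℝ := (Fintype.card V : ℝ) with hndef
    set P' : (α → V) → ℝ :=
      fun φ => P φ * (n * (τ (φ u) (φ v) (φ w) / wt (φ u) (φ v))) with hP'
    have master : ∀ F : (α → V) → ℝ, ∑ φ, P' φ * F φ =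
        ∑ φ, P φ * ∑ c, τ (φ u) (φ v) c / wt (φ u) (φ v) * F (Function.update φ w c) := by
      intro F
      have e := avg_update (V := V) w (fun φ => P' φ * F φ)
      apply mul_left_cancel₀ hn.ne'
      rw [← e, Finset.mul_sum]
      refine Finset.sum_congr rfl fun φ _ => ?_
      simp only [hP', Function.update_self, Function.update_of_ne hwu, Function.update_of_ne hwv,
        pind _ _ _ hw, Finset.mul_sum]
      refine Finset.sum_congr rfl fun c _ => by ring
    have master2 : ∀ F : (α → V) → ℝ, (∀ φ c, F (Function.update φ w c) = F φ) →
        ∑ φ, P' φ * F φ = ∑ φ, P φ * F φ := by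
      intro F hF
      rw [master]
      refine Finset.sum_congr rfl fun φ _ => ?_
      simp only [hF]
      by_cases hz : P φ = 0
      · simp [hz]
      · have := psupp φ hz u v huv
        rw [← Finset.sum_mul, ← Finset.sum_div, ← hwt, div_self this, one_mul]
    -- the triple marginal
    have triple : ∀ g : V → V → V → ℝ, ∑ φ, P' φ * g (φ u) (φ v) (φ w) =
        ∑ a, ∑ b, ∑ c, τ a b c / N * g a b c := by
      intro g
      rw [master]
      simp only [Function.update_self, Function.update_of_ne hwu, Function.update_of_ne hwv]
      rw [pmarg u v huv (fun a b => ∑ c, τ a b c / wt a b * g a b c)]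
      refine Finset.sum_congr rfl fun a _ => Finset.sum_congr rfl fun b _ => ?_
      rw [Finset.mul_sum]
      refine Finset.sum_congr rfl fun c _ => ?_
      by_cases hz : τ a b c = 0
      · simp [hz]
      · have := hτw a b c hz
        field_simp
    have mwu : ∀ g : V → V → ℝ, ∑ φ, P' φ * g (φ w) (φ u) = ∑ a, ∑ b, wt a b / N * g a b := by
      intro g
      rw [triple (fun a _ c => g c a)]
      have : ∀ a, ∑ b, ∑ c, τ a b c / N * g c a = ∑ c, wt c a / N * g c a := by
        intro a
        rw [Finset.sum_comm]
        refine Finset.sum_congr rfl fun c _ => ?_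
        rw [hwt, Finset.sum_div, Finset.sum_mul]
        refine Finset.sum_congr rfl fun b _ => ?_
        rw [hs2 a b c, hs1 a c b]
      simp only [this]
      rw [Finset.sum_comm]
    have mwv : ∀ g : V → V → ℝ, ∑ φ, P' φ * g (φ w) (φ v) = ∑ a, ∑ b, wt a b / N * g a b := by
      intro g
      rw [triple (fun _ b c => g c b), Finset.sum_comm]
      have : ∀ b, ∑ a, ∑ c, τ a b c / N * g c b = ∑ c, wt c b / N * g c b := by
        intro b
        rw [Finset.sum_comm]
        refine Finset.sum_congr rfl fun c _ => ?_
        rw [hwt, Finset.sum_div, Finset.sum_mul]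
        refine Finset.sum_congr rfl fun a _ => ?_
        rw [hs1 a b c, hs2 b a c, hs1 b c a]
      simp only [this]
      rw [Finset.sum_comm]
    have swap : ∀ g : V → V → ℝ, ∑ a, ∑ b, wt a b / N * g b a = ∑ a, ∑ b, wt a b / N * g a b := by
      intro g
      rw [Finset.sum_comm]
      refine Finset.sum_congr rfl fun a _ => Finset.sum_congr rfl fun b _ => ?_
      rw [hwsymm]
    have nz : ∀ φ, P' φ ≠ 0 → P φ ≠ 0 ∧ τ (φ u) (φ v) (φ w) ≠ 0 := by
      intro φ hφ
      constructor
      · intro hz; apply hφ; simp [hP', hz]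
      · intro hz; apply hφ; simp [hP', hz]
    refine ⟨P', ?_, ?_, ?_, ?_, ?_, ?_⟩
    · intro φ
      have h1 := hw0 (φ u) (φ v)
      have h2 := h0 (φ u) (φ v) (φ w)
      have h3 := p0 φ
      simp only [hP']
      positivity
    · intro φ x c hx
      simp only [Finset.mem_insert, not_or] at hx
      have hxu : u ≠ x := fun e => hx.2 (e ▸ hu)
      have hxv : v ≠ x := fun e => hx.2 (e ▸ hv)
      simp only [hP', pind _ _ _ hx.2, Function.update_of_ne hxu, Function.update_of_ne hxv,
        Function.update_of_ne (Ne.symm hx.1)]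
    · intro x y hxy g
      simp only [Finset.mem_insert, Sym2.eq_iff] at hxy
      rcases hxy with (⟨rfl, rfl⟩ | ⟨rfl, rfl⟩) | (⟨rfl, rfl⟩ | ⟨rfl, rfl⟩) | hxy
      · exact mwu g
      · rw [mwu (fun a b => g b a), swap]
      · exact mwv g
      · rw [mwv (fun a b => g b a), swap]
      · obtain ⟨hx, hy, _⟩ := h.mem x y hxy
        have hwx : x ≠ w := fun e => hw (e ▸ hx)
        have hwy : y ≠ w := fun e => hw (e ▸ hy)
        rw [master2 (fun φ => g (φ x) (φ y)), pmarg x y hxy g]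
        intro φ c
        simp only [Function.update_of_ne hwx, Function.update_of_ne hwy]
    · have e1 : ∀ φ, P' φ * (-Real.log (P' φ)) =
          P' φ * (-Real.log (P φ) - Real.log n + Real.log (wt (φ u) (φ v))) := by
        intro φ
        by_cases hz : P' φ = 0
        · simp [hz]
        · obtain ⟨q1, q2⟩ := nz φ hz
          have q3 := hτw _ _ _ q2
          have q4 : τ (φ u) (φ v) (φ w) = 1 := (h01 _ _ _).resolve_left q2
          congr 1
          simp only [hP']
          rw [q4, Real.log_mul q1 (by positivity), Real.log_mul hn.ne' (by positivity),
            Real.log_div one_ne_zero q3, Real.log_one]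
          ring
      simp only [e1]
      rw [master2]
      · have e2 : ∀ φ, P φ * (-Real.log (P φ) - Real.log n + Real.log (wt (φ u) (φ v))) =
          P φ * (-Real.log (P φ)) - P φ * Real.log n + P φ * Real.log (wt (φ u) (φ v)) := by
          intro φ; ring
        simp only [e2, Finset.sum_add_distrib, Finset.sum_sub_distrib]
        rw [pent, ← Finset.sum_mul, psum, pmarg u v huv (fun a b => Real.log (wt a b)),
          Finset.card_insert_of_notMem hw]
        push_cast
        ring
      · intro φ c
        simp only [pind _ _ _ hw, Function.update_of_ne hwu, Function.update_of_ne hwv]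
    · intro φ hφ x y hxy
      obtain ⟨q1, q2⟩ := nz φ hφ
      have q3 : wt (φ w) (φ u) ≠ 0 := by
        apply hτw _ _ (φ v)
        rwa [hs1, hs2]
      have q4 : wt (φ w) (φ v) ≠ 0 := by
        apply hτw _ _ (φ u)
        rwa [hs1, hs2, hs1]
      simp only [Finset.mem_insert, Sym2.eq_iff] at hxy
      rcases hxy with (⟨rfl, rfl⟩ | ⟨rfl, rfl⟩) | (⟨rfl, rfl⟩ | ⟨rfl, rfl⟩) | hxy
      · exact q3
      · rwa [hwsymm]
      · exact q4
      · rwa [hwsymm]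
      · exact psupp φ q1 x y hxy
    · have := master2 (fun _ => 1) (fun _ _ => rfl)
      simpa [psum] using this

/-- The triangle indicator. -/
noncomputable def tri {V : Type*} (G : SimpleGraph V) (a b c : V) : ℝ :=
  open Classical in if G.Adj a b ∧ G.Adj b c ∧ G.Adj a c then 1 else 0

/-- The edge indicator. -/
noncomputable def edg {V : Type*} (G : SimpleGraph V) (a b : V) : ℝ :=
  open Classical in if G.Adj a b then 1 else 0

theorem tangent_pow (s t : ℝ) (hs : 0 ≤ s) (ht : 0 ≤ t) (j : ℕ) :
    ((j : ℝ) + 1) * t ^ j * s - j * t ^ (j + 1) ≤ s ^ (j + 1) := by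
  induction j with
  | zero => simp
  | succ j ih =>
    have h1 := mul_le_mul_of_nonneg_right ih hs
    have h2 : 0 ≤ ((j : ℝ) + 1) * t ^ j * (s - t) ^ 2 := by positivity
    push_cast
    calc _ = (((j : ℝ) + 1) * t ^ j * s - j * t ^ (j + 1)) * s
          - ((j : ℝ) + 1) * t ^ j * (s - t) ^ 2 := by ring
      _ ≤ s ^ (j + 1) * s := by linarith
      _ = _ := by ring

theorem hom_lower {α V : Type*} [Fintype α] [DecidableEq α] [Fintype V] [Nonempty V]
    (H : SimpleGraph α) (G : SimpleGraph V) (E : Finset (Sym2 α)) (hB : Build Finset.univ E)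
    (hE : ∀ x y, H.Adj x y → s(x, y) ∈ E) (j : ℕ) (hj : Fintype.card α = j + 3)
    (t : ℝ) (ht : 0 ≤ t) :
    ((j : ℝ) + 1) * t ^ j * (∑ a, ∑ b, ∑ c, tri G a b c)
      - j * t ^ (j + 1) * (∑ a, ∑ b, edg G a b) ≤ (Nat.card (H →g G) : ℝ) := by
  classical
  obtain ⟨m, hm⟩ : ∃ m : ℝ, m = ∑ a, ∑ b, edg G a b := ⟨_, rfl⟩
  obtain ⟨wt, hwt⟩ : ∃ wt : V → V → ℝ, ∀ a b, wt a b = ∑ c, tri G a b c := ⟨_, fun _ _ => rfl⟩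
  obtain ⟨N, hN⟩ : ∃ N : ℝ, N = ∑ a, ∑ b, wt a b := ⟨_, rfl⟩
  simp only [← hwt]
  rw [← hm, ← hN]
  have htri0 : ∀ a b c, 0 ≤ tri G a b c := by
    intro a b c; unfold tri; split_ifs <;> simp
  have hedg0 : ∀ a b, 0 ≤ edg G a b := by
    intro a b; unfold edg; split_ifs <;> simp
  have hw0 : ∀ a b, 0 ≤ wt a b := fun a b => by
    rw [hwt]; exact Finset.sum_nonneg fun c _ => htri0 a b c
  have hm0 : 0 ≤ m := hm ▸ Finset.sum_nonneg fun a _ => Finset.sum_nonneg fun b _ => hedg0 a b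
  have hN0 : 0 ≤ N := hN ▸ Finset.sum_nonneg fun a _ => Finset.sum_nonneg fun b _ => hw0 a b
  have hwadj : ∀ a b, wt a b ≠ 0 → G.Adj a b := by
    intro a b h
    by_contra hab
    apply h
    simp [hwt, tri, hab]
  rcases hN0.eq_or_lt with hz | hNpos
  · rw [← hz]
    have : 0 ≤ (j : ℝ) * t ^ (j + 1) * m := by positivity
    have h2 : (0 : ℝ) ≤ (Nat.card (H →g G) : ℝ) := by positivity
    linarith
  obtain ⟨P, p0, -, -, pent, psupp, psum⟩ := entropy_build (α := α) (tri G)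
    (by intro a b c; unfold tri; split_ifs <;> simp)
    (by intro a b c; unfold tri; congr 1; simp only [G.adj_comm a b, eq_iff_iff]; tauto)
    (by intro a b c; unfold tri; congr 1; simp only [G.adj_comm b c, eq_iff_iff]; tauto)
    wt hwt N hN hNpos Finset.univ E hB
  obtain ⟨L, hL⟩ : ∃ L : ℝ, L = ∑ a, ∑ b, wt a b / N * Real.log (wt a b) := ⟨_, rfl⟩
  rw [← hL] at pent
  set A : Finset (α → V) := Finset.univ.filter (fun φ => ∀ x y, H.Adj x y → G.Adj (φ x) (φ y))
    with hA
  have hcard : Nat.card (H →g G) = A.card := by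
    have h1 : Nat.card {φ : α → V // ∀ x y, H.Adj x y → G.Adj (φ x) (φ y)} = A.card := by
      rw [Nat.card_eq_fintype_card, Fintype.card_subtype]
    rw [← h1]
    refine Nat.card_congr ⟨fun f => ⟨f, fun x y h => f.map_adj h⟩,
      fun f => ⟨f.1, fun {x y} h => f.2 x y h⟩, fun f => rfl, fun f => rfl⟩
  have hPA : ∀ φ, P φ ≠ 0 → φ ∈ A := by
    intro φ hφ
    simp only [hA, Finset.mem_filter, Finset.mem_univ, true_and]
    intro x y hxy
    exact hwadj _ _ (psupp φ hφ x y (hE x y hxy))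
  have hApos : 0 < A.card := by
    rw [Finset.card_pos]
    by_contra hne
    rw [Finset.not_nonempty_iff_eq_empty] at hne
    have : ∀ φ, P φ = 0 := by
      intro φ; by_contra h; have := hPA φ h; simp [hne] at this
    simp [this] at psum
  obtain ⟨D, hD⟩ : ∃ D : ℝ, D = (A.card : ℝ) := ⟨_, rfl⟩
  have hDpos : 0 < D := by rw [hD]; exact_mod_cast hApos
  have J1 : ∑ φ, P φ * (-Real.log (P φ)) ≤ Real.log D := by
    have pt : ∀ φ, P φ * (-Real.log (P φ)) ≤
        P φ * Real.log D + (if φ ∈ A then 1 / D else 0) - P φ := by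
      intro φ
      by_cases hz : P φ = 0
      · simp only [hz]
        split_ifs <;> simp [hDpos.le]
      · have hp : 0 < P φ := lt_of_le_of_ne (p0 φ) (Ne.symm hz)
        rw [if_pos (hPA φ hz)]
        have := Real.log_le_sub_one_of_pos (x := 1 / (P φ * D)) (by positivity)
        rw [Real.log_div one_ne_zero (by positivity), Real.log_one,
          Real.log_mul hz hDpos.ne'] at this
        have h2 := mul_le_mul_of_nonneg_left this hp.le
        have h3 : P φ * (1 / (P φ * D) - 1) = 1 / D - P φ := by field_simp
        rw [h3] at h2
        linarith
    have := Finset.sum_le_sum (fun φ (_ : φ ∈ Finset.univ) => pt φ)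
    rw [Finset.sum_sub_distrib, Finset.sum_add_distrib, ← Finset.sum_mul, psum] at this
    rw [Finset.sum_ite_mem, Finset.univ_inter, Finset.sum_const, nsmul_eq_mul, ← hD] at this
    have h4 : D * (1 / D) = 1 := by field_simp
    rw [h4] at this
    linarith
  have hmpos : 0 < m := by
    rcases hm0.eq_or_lt with hz | h
    · exfalso
      have : ∀ a b, edg G a b = 0 := by
        intro a b
        rw [hm] at hz
        have h1 := (Finset.sum_eq_zero_iff_of_nonneg (fun a _ =>
          Finset.sum_nonneg fun b _ => hedg0 a b)).1 hz.symm a (Finset.mem_univ _)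
        exact (Finset.sum_eq_zero_iff_of_nonneg (fun b _ => hedg0 a b)).1 h1 b (Finset.mem_univ _)
      have h2 : ∀ a b, wt a b = 0 := by
        intro a b
        by_contra h
        have h3 := this a b
        simp [edg, hwadj a b h] at h3
      simp [hN, h2] at hNpos
    · exact h
  obtain ⟨s, hs⟩ : ∃ s : ℝ, s = N / m := ⟨_, rfl⟩
  have hspos : 0 < s := by rw [hs]; positivity
  have J2 : Real.log s ≤ L := by
    have pt : ∀ a b, wt a b / N * Real.log s + wt a b / N - edg G a b / m ≤
        wt a b / N * Real.log (wt a b) := by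
      intro a b
      by_cases hz : wt a b = 0
      · rw [hz]; have := hedg0 a b; simp; positivity
      · have hp : 0 < wt a b := lt_of_le_of_ne (hw0 a b) (Ne.symm hz)
        have he : edg G a b = 1 := by simp [edg, hwadj a b hz]
        rw [he]
        have := Real.log_le_sub_one_of_pos (x := s / wt a b) (by positivity)
        rw [Real.log_div hspos.ne' hz] at this
        have h2 := mul_le_mul_of_nonneg_left this (show 0 ≤ wt a b / N by positivity)
        have h3 : wt a b / N * (s / wt a b - 1) = 1 / m - wt a b / N := by
          rw [hs]; field_simp
        rw [h3] at h2
        linarith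
    have := Finset.sum_le_sum (fun a (_ : a ∈ Finset.univ) =>
      Finset.sum_le_sum (fun b (_ : b ∈ Finset.univ) => pt a b))
    simp only [Finset.sum_sub_distrib, Finset.sum_add_distrib, ← Finset.sum_mul,
      ← Finset.sum_div] at this
    rw [← hN, ← hm, ← hL, div_self hNpos.ne', div_self hmpos.ne'] at this
    linarith
  have h5 : Real.log (N * s ^ j) ≤ Real.log D := by
    rw [Real.log_mul hNpos.ne' (by positivity), Real.log_pow]
    rw [pent] at J1
    rw [Finset.card_univ, hj] at J1
    have h6 := mul_le_mul_of_nonneg_left J2 (Nat.cast_nonneg (α := ℝ) j)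
    push_cast at J1
    have h7 : ((j : ℝ) + 3 - 3) * L = j * L := by ring
    rw [h7] at J1
    simp only [sub_self, zero_mul] at J1
    linarith
  have h8 : N * s ^ j ≤ D := (Real.log_le_log_iff (by positivity) hDpos).1 h5
  rw [hcard, ← hD]
  have h9 := mul_le_mul_of_nonneg_left (tangent_pow s t hspos.le ht j) hmpos.le
  have h10 : N = m * s := by rw [hs]; field_simp
  calc _ = m * (((j : ℝ) + 1) * t ^ j * s - j * t ^ (j + 1)) := by
        linear_combination ((j : ℝ) + 1) * t ^ j * h10
    _ ≤ m * s ^ (j + 1) := h9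
    _ = N * s ^ j := by linear_combination (-s ^ j) * h10
    _ ≤ D := h8

theorem goodman {n : ℕ} (hn : 0 < n) (R : SimpleGraph (Fin n)) :
    (n : ℝ) ^ 3 / 4 - 3 * (n : ℝ) ^ 2 ≤
      (∑ a, ∑ b, ∑ c, tri R a b c) + ∑ a, ∑ b, ∑ c, tri Rᶜ a b c := by
  classical
  have hn' : (0 : ℝ) < n := by exact_mod_cast hn
  set d : Fin n → ℝ := fun a => ∑ b, edg R a b with hd
  set e : ℝ := ∑ a, d a with he
  have hsymm : ∀ a b, edg R a b = edg R b a := by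
    intro a b; unfold edg; simp [R.adj_comm a b]
  have pt : ∀ a b c, 1 - edg R a b - edg R b c - edg R a c + edg R a b * edg R a c
      + edg R b a * edg R b c + edg R c a * edg R c b
      - ((if a = b then 1 else 0) + (if b = c then 1 else 0) + (if a = c then 1 else 0))
      ≤ tri R a b c + tri Rᶜ a b c := by
    intro a b c
    rw [hsymm b a, hsymm c a, hsymm c b]
    by_cases h1 : a = b
    · subst h1
      by_cases h2 : a = c
      · subst h2
        simp [edg, tri]
      · by_cases h3 : R.Adj a c <;> simp [edg, tri, h2, h3]
    · by_cases h2 : a = c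
      · subst h2
        have h1' := Ne.symm h1
        by_cases h3 : R.Adj a b <;> simp [edg, tri, h1, h1', h3, R.adj_comm b a]
      · by_cases h4 : b = c
        · subst h4
          by_cases h3 : R.Adj a b <;> simp [edg, tri, h1, h3]
        · by_cases h5 : R.Adj a b <;> by_cases h6 : R.Adj b c <;> by_cases h7 : R.Adj a c <;>
            simp [edg, tri, h1, h2, h4, h5, h6, h7]
  have hsum := Finset.sum_le_sum (fun a (_ : a ∈ Finset.univ) =>
      Finset.sum_le_sum (fun b (_ : b ∈ Finset.univ) =>
      Finset.sum_le_sum (fun c (_ : c ∈ Finset.univ) => pt a b c)))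
  have c1 : ∑ a : Fin n, ∑ b : Fin n, ∑ c : Fin n, edg R a b = n * e := by
    simp [he, hd, Finset.mul_sum]
  have c2 : ∑ a : Fin n, ∑ b : Fin n, ∑ c : Fin n, edg R b c = n * e := by
    simp [he, hd]
  have c3 : ∑ a : Fin n, ∑ b : Fin n, ∑ c : Fin n, edg R a c = n * e := by
    simp [he, hd, Finset.mul_sum]
  have c4 : ∑ a : Fin n, ∑ b : Fin n, ∑ c : Fin n, edg R a b * edg R a c = ∑ a, d a ^ 2 := by
    refine Finset.sum_congr rfl fun a _ => ?_
    rw [sq, hd, Finset.sum_mul_sum]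
  have c5 : ∑ a : Fin n, ∑ b : Fin n, ∑ c : Fin n, edg R b a * edg R b c = ∑ a, d a ^ 2 := by
    rw [Finset.sum_comm]
    exact c4
  have c6 : ∑ a : Fin n, ∑ b : Fin n, ∑ c : Fin n, edg R c a * edg R c b = ∑ a, d a ^ 2 := by
    rw [← c4, Finset.sum_comm_cycle]
  have c7 : ∑ a : Fin n, ∑ b : Fin n, ∑ c : Fin n, (if a = b then (1 : ℝ) else 0) = n ^ 2 := by
    simp [sq]
  have c8 : ∑ a : Fin n, ∑ b : Fin n, ∑ c : Fin n, (if b = c then (1 : ℝ) else 0) = n ^ 2 := by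
    simp [sq]
  have c9 : ∑ a : Fin n, ∑ b : Fin n, ∑ c : Fin n, (if a = c then (1 : ℝ) else 0) = n ^ 2 := by
    simp [sq]
  have c0 : ∑ a : Fin n, ∑ b : Fin n, ∑ c : Fin n, (1 : ℝ) = n ^ 3 := by
    simp; ring
  simp only [Finset.sum_sub_distrib, Finset.sum_add_distrib] at hsum
  rw [c0, c1, c2, c3, c4, c5, c6, c7, c8, c9] at hsum
  have cs : e ^ 2 ≤ n * ∑ a, d a ^ 2 := by
    have := sq_sum_le_card_mul_sum_sq (s := (Finset.univ : Finset (Fin n))) (f := d)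
    simpa using this
  have fin : (n : ℝ) ^ 3 / 4 ≤ n ^ 3 - 3 * (n * e) + 3 * ∑ a, d a ^ 2 := by
    have h : 0 ≤ (n : ℝ) * (n ^ 3 - 3 * (n * e) + 3 * ∑ a, d a ^ 2 - n ^ 3 / 4) := by
      nlinarith [sq_nonneg ((n : ℝ) ^ 2 / 2 - e)]
    have := nonneg_of_mul_nonneg_right h hn'
    linarith
  linarith

theorem edge_total {n : ℕ} (R : SimpleGraph (Fin n)) :
    (∑ a, ∑ b, edg R a b) + (∑ a, ∑ b, edg Rᶜ a b) ≤ (n : ℝ) ^ 2 := by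
  classical
  have : ∀ a b, edg R a b + edg Rᶜ a b ≤ 1 := by
    intro a b
    unfold edg
    by_cases h : R.Adj a b
    · simp [h]
    · simp [h]; split_ifs <;> simp
  have hsum := Finset.sum_le_sum (fun a (_ : a ∈ Finset.univ) =>
      Finset.sum_le_sum (fun b (_ : b ∈ Finset.univ) => this a b))
  simp only [Finset.sum_add_distrib] at hsum
  have c0 : ∑ a : Fin n, ∑ b : Fin n, (1 : ℝ) = n ^ 2 := by simp [sq]
  rw [c0] at hsum
  exact hsum

theorem exists_build {α : Type*} [Fintype α] [DecidableEq α] (H : SimpleGraph α)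
    (ι : Type) [Fintype ι] (bag : ι → Finset α) (T : SimpleGraph ι)
    (hdec : IsJDecomp H (⊤ : SimpleGraph (Fin 3)) bag T)
    (hint : ∀ X Y : ι, T.Adj X Y → (bag X ∩ bag Y).card = 2) :
    3 ≤ Fintype.card α ∧
    ∃ E : Finset (Sym2 α), Build Finset.univ E ∧ ∀ e, e ∈ E ↔ e ∈ H.edgeSet := by
  classical
  obtain ⟨⟨htree, hcov, hedge, hpath⟩, hiso, -⟩ := hdec
  have hcard : ∀ X, (bag X).card = 3 := by
    intro X
    obtain ⟨f⟩ := hiso X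
    have := Fintype.card_congr f.toEquiv
    simpa using this
  have hclique : ∀ X x y, x ∈ bag X → y ∈ bag X → x ≠ y → H.Adj x y := by
    intro X x y hx hy hxy
    obtain ⟨f⟩ := hiso X
    have h1 : (⊤ : SimpleGraph (Fin 3)).Adj (f ⟨x, hx⟩) (f ⟨y, hy⟩) := by
      rw [SimpleGraph.top_adj]
      intro h
      apply hxy
      have := f.injective h
      simpa using this
    have h2 := f.map_adj_iff.1 h1
    simpa using h2
  have grow : ∀ k : ℕ, k + 1 ≤ Fintype.card ι → ∃ C : Finset ι, C.card = k + 1 ∧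
      (∀ Z ∈ C, ∀ Y ∈ C, ∃ p : T.Walk Z Y, ∀ W ∈ p.support, W ∈ C) ∧
      ∃ (S : Finset α) (E : Finset (Sym2 α)), Build S E ∧
        (∀ x, x ∈ S ↔ ∃ X ∈ C, x ∈ bag X) ∧
        (∀ x y, s(x, y) ∈ E ↔ x ≠ y ∧ ∃ X ∈ C, x ∈ bag X ∧ y ∈ bag X) := by
    intro k
    induction k with
    | zero =>
      intro _
      obtain ⟨X⟩ := htree.connected.nonempty
      obtain ⟨a, b, c, hab, hac, hbc, hX⟩ := Finset.card_eq_three.1 (hcard X)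
      refine ⟨{X}, by simp, ?_, insert c {a, b}, insert s(c, a) (insert s(c, b) {s(a, b)}),
        Build.step _ _ a b c (Build.base a b hab) (by simp) ?_, ?_, ?_⟩
      · intro Z hZ Y hY
        simp only [Finset.mem_singleton] at hZ hY
        subst hZ; subst hY
        exact ⟨SimpleGraph.Walk.nil, by simp⟩
      · simp [hac.symm, hbc.symm]
      · intro x
        simp only [Finset.mem_singleton, exists_eq_left, hX, Finset.mem_insert]
        tauto
      · intro x y
        simp only [Finset.mem_singleton, exists_eq_left, hX, Finset.mem_insert, Sym2.eq_iff]
        grind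
    | succ k ih =>
      intro hk
      obtain ⟨C, hC, hwalk, S, E, hB, hS, hE⟩ := ih (by omega)
      -- find a tree edge leaving C
      have hex : ∃ X Y, T.Adj Y X ∧ Y ∈ C ∧ X ∉ C := by
        obtain ⟨Y0, hY0⟩ : C.Nonempty := by rw [← Finset.card_pos]; omega
        obtain ⟨X0, hX0⟩ : ∃ X, X ∉ C := by
          by_contra hne
          push Not at hne
          have : C = Finset.univ := by ext; simp [hne]
          rw [this, Finset.card_univ] at hC
          omega
        obtain ⟨p⟩ := htree.connected.preconnected Y0 X0
        obtain ⟨d, -, h1, h2⟩ := p.exists_boundary_dart (C : Set ι) (by simpa using hY0)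
          (by simpa using hX0)
        exact ⟨d.snd, d.fst, d.adj, by simpa using h1, by simpa using h2⟩
      obtain ⟨X, Y, hYX, hYC, hXC⟩ := hex
      obtain ⟨u, v, huv, huvE⟩ := Finset.card_eq_two.1 (hint X Y hYX.symm)
      have hsd : (bag X \ bag Y).card = 1 := by
        have := Finset.card_sdiff_add_card_inter (bag X) (bag Y)
        rw [hcard, hint X Y hYX.symm] at this
        omega
      obtain ⟨w, hw⟩ := Finset.card_eq_one.1 hsd
      have hu : u ∈ bag X ∩ bag Y := by rw [huvE]; simp
      have hv : v ∈ bag X ∩ bag Y := by rw [huvE]; simp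
      have hww : w ∈ bag X \ bag Y := by rw [hw]; simp
      rw [Finset.mem_inter] at hu hv
      rw [Finset.mem_sdiff] at hww
      have hX : ∀ x, x ∈ bag X ↔ x = u ∨ x = v ∨ x = w := by
        intro x
        constructor
        · intro hx
          by_cases hxY : x ∈ bag Y
          · have : x ∈ bag X ∩ bag Y := Finset.mem_inter.2 ⟨hx, hxY⟩
            rw [huvE] at this
            simp at this
            tauto
          · have : x ∈ bag X \ bag Y := Finset.mem_sdiff.2 ⟨hx, hxY⟩
            rw [hw] at this
            simp at this
            tauto
        · rintro (rfl | rfl | rfl)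
          · exact hu.1
          · exact hv.1
          · exact hww.1
      have hwS : w ∉ S := by
        intro hwS
        obtain ⟨Z, hZC, hwZ⟩ := (hS w).1 hwS
        obtain ⟨p, hp⟩ := hwalk Y hYC Z hZC
        have hXp : X ∉ p.bypass.support := fun h => hXC (hp _ (p.support_bypass_subset_support h))
        have hq : (SimpleGraph.Walk.cons hYX.symm p.bypass).IsPath :=
          (SimpleGraph.Walk.cons_isPath_iff _ _).2 ⟨p.bypass_isPath, hXp⟩
        have := hpath X Z Y _ hq (by simp)
        exact hww.2 (this (Finset.mem_inter.2 ⟨hww.1, hwZ⟩))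
      refine ⟨insert X C, by rw [Finset.card_insert_of_notMem hXC, hC], ?_,
        insert w S, insert s(w, u) (insert s(w, v) E),
        Build.step S E u v w hB ((hE u v).2 ⟨huv, Y, hYC, hu.2, hv.2⟩) hwS, ?_, ?_⟩
      · have hXZ : ∀ Z ∈ C, ∃ p : T.Walk X Z, ∀ W ∈ p.support, W ∈ insert X C := by
          intro Z hZ
          obtain ⟨p, hp⟩ := hwalk Y hYC Z hZ
          refine ⟨SimpleGraph.Walk.cons hYX.symm p, ?_⟩
          intro W hW
          rw [SimpleGraph.Walk.support_cons, List.mem_cons] at hW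
          rcases hW with rfl | hW
          · simp
          · exact Finset.mem_insert_of_mem (hp W hW)
        intro Z hZ Z' hZ'
        rw [Finset.mem_insert] at hZ hZ'
        rcases hZ with rfl | hZ
        · rcases hZ' with rfl | hZ'
          · exact ⟨SimpleGraph.Walk.nil, by simp⟩
          · exact hXZ Z' hZ'
        · rcases hZ' with rfl | hZ'
          · obtain ⟨p, hp⟩ := hXZ Z hZ
            exact ⟨p.reverse, fun W hW => hp W (by simpa using hW)⟩
          · obtain ⟨p, hp⟩ := hwalk Z hZ Z' hZ'
            exact ⟨p, fun W hW => Finset.mem_insert_of_mem (hp W hW)⟩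
      · intro x
        simp only [Finset.mem_insert, exists_eq_or_imp, hS, hX]
        constructor
        · rintro (h | h)
          · tauto
          · tauto
        · rintro ((rfl | rfl | rfl) | h)
          · exact Or.inr ⟨Y, hYC, hu.2⟩
          · exact Or.inr ⟨Y, hYC, hv.2⟩
          · exact Or.inl rfl
          · exact Or.inr h
      · intro x y
        have hwu : w ≠ u := by rintro rfl; exact hww.2 hu.2
        have hwv : w ≠ v := by rintro rfl; exact hww.2 hv.2
        simp only [Finset.mem_insert, exists_eq_or_imp, hE, hX, Sym2.eq_iff]
        constructor
        · rintro ((⟨rfl, rfl⟩ | ⟨rfl, rfl⟩) | (⟨rfl, rfl⟩ | ⟨rfl, rfl⟩) | ⟨h1, h2⟩)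
          · exact ⟨hwu, Or.inl (by simp)⟩
          · exact ⟨hwu.symm, Or.inl (by simp)⟩
          · exact ⟨hwv, Or.inl (by simp)⟩
          · exact ⟨hwv.symm, Or.inl (by simp)⟩
          · exact ⟨h1, Or.inr h2⟩
        · rintro ⟨hne, (⟨hx, hy⟩ | h)⟩
          · rcases hx with rfl | rfl | rfl <;> rcases hy with rfl | rfl | rfl
            · exact absurd rfl hne
            · exact Or.inr (Or.inr ⟨hne, Y, hYC, hu.2, hv.2⟩)
            · simp
            · exact Or.inr (Or.inr ⟨hne, Y, hYC, hv.2, hu.2⟩)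
            · exact absurd rfl hne
            · simp
            · simp
            · simp
            · exact absurd rfl hne
          · exact Or.inr (Or.inr ⟨hne, h⟩)
  obtain ⟨X0⟩ := htree.connected.nonempty
  have hpos : 0 < Fintype.card ι := Fintype.card_pos_iff.2 ⟨X0⟩
  refine ⟨by rw [← hcard X0]; exact Finset.card_le_univ _, ?_⟩
  obtain ⟨C, hC, -, S, E, hB, hS, hE⟩ := grow (Fintype.card ι - 1) (by omega)
  have hCu : C = Finset.univ := by
    rw [← Finset.card_eq_iff_eq_univ]; omega
  have hSu : S = Finset.univ := by
    ext x
    obtain ⟨X, hX⟩ := hcov x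
    simp only [hS, hCu, Finset.mem_univ, iff_true, true_and]
    exact ⟨X, hX⟩
  rw [hSu] at hB
  refine ⟨E, hB, ?_⟩
  intro e
  induction e with
  | _ x y =>
    rw [hE, SimpleGraph.mem_edgeSet]
    constructor
    · rintro ⟨hne, X, -, hx, hy⟩
      exact hclique X x y hx hy hne
    · intro h
      obtain ⟨X, hx, hy⟩ := hedge x y h
      exact ⟨h.ne, X, by simp [hCu], hx, hy⟩

theorem stmt19 {α : Type*} [Fintype α] [DecidableEq α] (H : SimpleGraph α)
    (ι : Type) [Fintype ι] (bag : ι → Finset α) (T : SimpleGraph ι)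
    (hdec : IsJDecomp H (⊤ : SimpleGraph (Fin 3)) bag T)
    (hint : ∀ X Y : ι, T.Adj X Y → (bag X ∩ bag Y).card = 2)
    (ε : ℝ) (hε : 0 < ε) :
    ∃ n₀ : ℕ, ∀ n : ℕ, n₀ ≤ n →
      -- a red/blue colouring of the edges of Kₙ is given by the graph R of red edges;
      -- the blue edges form its complement Rᶜ
      ∀ R : SimpleGraph (Fin n),
        ((Nat.card (H →g R) + Nat.card (H →g Rᶜ) : ℕ) : ℝ) ≥
          ((2 : ℝ) ^ (1 - (edgeCount H : ℤ)) - ε) * (n : ℝ) ^ (Fintype.card α) := by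
  classical
  obtain ⟨h3, E, hB, hE⟩ := exists_build H ι bag T hdec hint
  obtain ⟨j, hj⟩ : ∃ j, Fintype.card α = j + 3 := ⟨Fintype.card α - 3, by omega⟩
  have hec : edgeCount H = 2 * (j + 1) + 1 := by
    have h1 : edgeCount H = E.card := by
      unfold edgeCount
      have : H.edgeSet = (E : Set (Sym2 α)) := by ext e; simp [hE]
      rw [this]
      simp
    have h2 := hB.card
    rw [Finset.card_univ] at h2
    omega
  have hpow : (2 : ℝ) ^ (1 - (edgeCount H : ℤ)) = (1 / 4 : ℝ) ^ (j + 1) := by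
    rw [hec]
    have : (1 - ((2 * (j + 1) + 1 : ℕ) : ℤ)) = -((2 * (j + 1) : ℕ) : ℤ) := by push_cast; ring
    rw [this, zpow_neg, zpow_natCast, pow_mul, ← inv_pow]
    norm_num
  rw [hpow]
  have hlim : Filter.Tendsto (fun n : ℕ => (1 / 4 - 3 / (n : ℝ)) ^ (j + 1)) Filter.atTop
      (nhds ((1 / 4 - 0 : ℝ) ^ (j + 1))) :=
    (tendsto_const_nhds.sub (tendsto_const_div_atTop_nhds_zero_nat 3)).pow _
  rw [sub_zero] at hlim
  have hev := hlim.eventually (lt_mem_nhds (show (1 / 4 : ℝ) ^ (j + 1) - ε < (1 / 4) ^ (j + 1) by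
    linarith))
  obtain ⟨n1, hn1⟩ := Filter.eventually_atTop.1 hev
  refine ⟨max n1 12, ?_⟩
  intro n hn R
  have hc := hn1 n (le_trans (le_max_left _ _) hn)
  have hn12 : 12 ≤ n := le_trans (le_max_right _ _) hn
  have hnR : (12 : ℝ) ≤ n := by exact_mod_cast hn12
  have hnpos : (0 : ℝ) < n := by linarith
  have : Nonempty (Fin n) := ⟨⟨0, by omega⟩⟩
  set c : ℝ := 1 / 4 - 3 / (n : ℝ) with hcdef
  have hc0 : 0 ≤ c := by
    have : 3 / (n : ℝ) ≤ 1 / 4 := by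
      rw [div_le_div_iff₀ hnpos (by norm_num)]; linarith
    linarith
  set t : ℝ := n * c with ht
  have ht0 : 0 ≤ t := by positivity
  have hEE : ∀ x y, H.Adj x y → s(x, y) ∈ E := fun x y h => (hE _).2 h
  have r1 := hom_lower H R E hB hEE j hj t ht0
  have r2 := hom_lower H Rᶜ E hB hEE j hj t ht0
  have g1 := goodman (by omega) R
  have g2 := edge_total R
  have g3 : (n : ℝ) ^ 3 / 4 - 3 * (n : ℝ) ^ 2 = t * n ^ 2 := by
    rw [ht, hcdef]; field_simp
  rw [g3] at g1
  have k1 := mul_le_mul_of_nonneg_left g1 (show 0 ≤ ((j : ℝ) + 1) * t ^ j by positivity)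
  have k2 := mul_le_mul_of_nonneg_left g2 (show 0 ≤ (j : ℝ) * t ^ (j + 1) by positivity)
  have k3 : t ^ (j + 1) * (n : ℝ) ^ 2 = c ^ (j + 1) * (n : ℝ) ^ (j + 3) := by
    rw [ht]; ring
  have k4 : ((1 / 4 : ℝ) ^ (j + 1) - ε) * (n : ℝ) ^ (j + 3) ≤ c ^ (j + 1) * (n : ℝ) ^ (j + 3) :=
    mul_le_mul_of_nonneg_right hc.le (by positivity)
  have k5 : ((j : ℝ) + 1) * t ^ j * (t * n ^ 2) - j * t ^ (j + 1) * n ^ 2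
      = t ^ (j + 1) * (n : ℝ) ^ 2 := by ring
  rw [hj, ge_iff_le]
  push_cast
  rw [mul_add] at k1 k2
  linarith
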